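/- For all subsets A, B ⊆ Z_2^n and I ⊆ [n], the compression of the sumset contains the sumset of the compressions: C_I(A) + C_I(B) ⊆ C_I(A+B). In particular |C_I(A) + C_I(B)| ≤ |A+B|. -/

import Mathlib

open Finset Pointwise

/-- Encoding of the lexicographic order on `(ZMod 2)^n`. -/
def lexNat {n : ℕ} (x : Fin n → ZMod 2) : ℕ := ∑ i, (x i).val * 2 ^ (i : ℕ)

/-- The `k` lexicographically smallest elements of `T`. -/
def initSeg {n : ℕ} (T : Finset (Fin n → ZMod 2)) (k : ℕ) : Finset (Fin n → ZMod 2) :=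
  T.filter fun x => (T.filter fun y => lexNat y < lexNat x).card < k

/-- The coset of the subgroup `H_I = ⟨e_i : i ∈ I⟩` containing `x`:
all `y` agreeing with `x` outside `I`. -/
def cosetOf {n : ℕ} (I : Finset (Fin n)) (x : Fin n → ZMod 2) : Finset (Fin n → ZMod 2) :=
  Finset.univ.filter fun y => ∀ i ∉ I, y i = x i

/-- The `I`-compression of `A`: in each coset `T` of `H_I`, replace `A ∩ T` by the
lexicographic initial segment of `T` of the same cardinality. -/
def compressI {n : ℕ} (I : Finset (Fin n)) (A : Finset (Fin n → ZMod 2)) :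
    Finset (Fin n → ZMod 2) :=
  Finset.univ.filter fun x => x ∈ initSeg (cosetOf I x) ((A ∩ cosetOf I x).card)

theorem xor_le_add_aux (i : ℕ) : ∀ j : ℕ, i ^^^ j ≤ i + j := by
  induction i using Nat.strong_induction_on with
  | _ i ih =>
  intro j
  rcases Nat.eq_zero_or_pos i with rfl | hi
  · simp
  have hd : (i ^^^ j) / 2 = i / 2 ^^^ j / 2 := Nat.xor_div_two
  have hm : (i ^^^ j) % 2 = (i + j) % 2 := Nat.xor_mod_two_eq
  have := ih (i / 2) (by omega) (j / 2)
  omega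

theorem split_exists (n : ℕ) : ∀ i j : ℕ, n ≤ i ^^^ j →
    ∃ t u, t + u = n ∧ t ≤ i ∧ u ≤ j ∧ n.choose t % 2 = 1 := by
  induction n using Nat.strong_induction_on with
  | _ n ih =>
  intro i j h
  rcases Nat.eq_zero_or_pos n with rfl | hn
  · exact ⟨0, 0, by simp⟩
  have hd : (i ^^^ j) / 2 = i / 2 ^^^ j / 2 := Nat.xor_div_two
  have hm : (i ^^^ j) % 2 = (i + j) % 2 := Nat.xor_mod_two_eq
  obtain ⟨t, u, h1, h2, h3, h4⟩ := ih (n / 2) (by omega) (i / 2) (j / 2) (by omega)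
  have luc : ∀ k, n.choose k % 2 = ((n % 2).choose (k % 2) * (n / 2).choose (k / 2)) % 2 := by
    intro k
    have : Fact (Nat.Prime 2) := ⟨Nat.prime_two⟩
    exact Choose.choose_modEq_choose_mod_mul_choose_div_nat
  have l0 : n.choose (2 * t) % 2 = 1 := by
    rw [luc]; simp [h4]
  rcases Nat.mod_two_eq_zero_or_one n with h0 | h0
  · exact ⟨2 * t, 2 * u, by omega, by omega, by omega, l0⟩
  have l1 : n.choose (2 * t + 1) % 2 = 1 := by
    rw [luc, h0]
    have a : (2 * t + 1) % 2 = 1 := by omega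
    have b : (2 * t + 1) / 2 = t := by omega
    simp [a, b, h4]
  by_cases c : 2 * t + 1 ≤ i
  · exact ⟨2 * t + 1, 2 * u, by omega, by omega, by omega, l1⟩
  · refine ⟨2 * t, 2 * u + 1, by omega, by omega, ?_, l0⟩
    by_contra c'
    have : i / 2 = t := by omega
    have : j / 2 = u := by omega
    have := xor_le_add_aux (i / 2) (j / 2)
    omega

open MvPolynomial in
theorem coeff_top {F : Type*} [Field F] (S : Finset F) :
    ∀ d : Fin 2 →₀ ℕ, #S ≤ d.degree →
    coeff d (∏ c ∈ S, ((X 0 + X 1 : MvPolynomial (Fin 2) F) - C c)) =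
      coeff d ((X 0 + X 1 : MvPolynomial (Fin 2) F) ^ #S) := by
  classical
  induction S using Finset.induction_on with
  | empty => simp
  | insert a S ha ih =>
    intro d hd
    rw [card_insert_of_notMem ha] at hd ⊢
    have hom : ((X 0 + X 1 : MvPolynomial (Fin 2) F) ^ #S).IsHomogeneous #S := by
      simpa using ((isHomogeneous_X F (0 : Fin 2)).add (isHomogeneous_X F (1 : Fin 2))).pow #S
    have hz : coeff d (∏ c ∈ S, ((X 0 + X 1 : MvPolynomial (Fin 2) F) - C c)) = 0 := by
      rw [ih d (by omega)]
      exact hom.coeff_eq_zero (by omega)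
    have hs : ∀ s ∈ d.support, #S ≤ (d - Finsupp.single s 1).degree := by
      intro s hs
      have h1 : Finsupp.single s 1 ≤ d := by
        rw [Finsupp.single_le_iff]
        exact Nat.one_le_iff_ne_zero.2 (Finsupp.mem_support_iff.1 hs)
      have h2 := congrArg Finsupp.degree (tsub_add_cancel_of_le h1)
      rw [map_add, Finsupp.degree_single] at h2
      omega
    rw [prod_insert ha, pow_succ', sub_mul, add_mul, add_mul, coeff_sub, coeff_C_mul, hz,
      coeff_add, coeff_add, coeff_X_mul', coeff_X_mul', coeff_X_mul', coeff_X_mul']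
    simp only [mul_zero, sub_zero]
    congr 1 <;> split_ifs with h <;> first | rfl | exact ih _ (hs _ h)

open MvPolynomial in
theorem core_field {F : Type*} [Field F] [CharP F 2] [DecidableEq F] (A B : Finset F) (i j : ℕ)
    (hA : i < #A) (hB : j < #B) : i ^^^ j < #(A + B) := by
  by_contra! hle
  obtain ⟨t, u, h1, h2, h3, h4⟩ := split_exists _ _ _ hle
  let d : Fin 2 →₀ ℕ := Finsupp.single 0 t + Finsupp.single 1 u
  have d0 : d 0 = t := by simp [d]
  have d1 : d 1 = u := by simp [d]
  have hd : d.degree = #(A + B) := by simp [d, h1]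
  let f := ∏ c ∈ A + B, ((X 0 + X 1 : MvPolynomial (Fin 2) F) - C c)
  have hc : coeff d f ≠ 0 := by
    rw [coeff_top _ _ hd.ge, coeff_add_pow, if_pos (by simp [d0, d1, h1]), d0]
    intro h0
    have := (CharP.cast_eq_zero_iff F 2 _).1 h0
    omega
  have hdeg : f.totalDegree = d.degree := by
    apply le_antisymm
    · rw [hd]
      refine (totalDegree_finsetProd _ _).trans ?_
      rw [card_eq_sum_ones]
      refine sum_le_sum fun c _ => ?_
      refine (totalDegree_sub_C_le _ _).trans ((totalDegree_add _ _).trans ?_)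
      simp
    · exact le_totalDegree (mem_support_iff.2 hc)
  obtain ⟨s, hs, hne⟩ := combinatorial_nullstellensatz_exists_eval_nonzero f d hc hdeg ![A, B]
    (by intro k; fin_cases k <;> simp [d0, d1] <;> omega)
  apply hne
  rw [eval_prod]
  refine prod_eq_zero (add_mem_add (hs 0) (hs 1)) ?_
  simp

theorem core_lemma {n : ℕ} (A B : Finset (Fin n → ZMod 2)) (i j : ℕ)
    (hA : i < #A) (hB : j < #B) : i ^^^ j < #(A + B) := by
  classical
  have : Fact (Nat.Prime 2) := ⟨Nat.prime_two⟩
  let F := GaloisField 2 (n + 1)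
  have hf : Module.finrank (ZMod 2) F = n + 1 := GaloisField.finrank 2 (by omega)
  let b : Module.Basis (Fin (n + 1)) (ZMod 2) F := Module.finBasisOfFinrankEq _ _ hf
  let v : Fin n → F := fun k => b k.castSucc
  have hv : LinearIndependent (ZMod 2) v :=
    b.linearIndependent.comp _ (Fin.castSucc_injective n)
  let φ := Fintype.linearCombination (ZMod 2) v
  have hφ : Function.Injective φ := hv.fintypeLinearCombination_injective
  have := core_field (A.image φ) (B.image φ) i j (by rwa [card_image_of_injective _ hφ])
    (by rwa [card_image_of_injective _ hφ])
  rwa [← image_add, card_image_of_injective _ hφ] at this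

theorem lexNat_eq_ofBits {n : ℕ} (x : Fin n → ZMod 2) :
    lexNat x = Nat.ofBits (fun i => decide (x i = 1)) := by
  induction n with
  | zero => simp [lexNat]
  | succ n ih =>
    have h := ih (x ∘ Fin.succ)
    rw [Nat.ofBits_succ]
    change _ = 2 * Nat.ofBits (fun i => decide ((x ∘ Fin.succ) i = 1)) + _
    rw [← h]
    unfold lexNat
    rw [Fin.sum_univ_succ, mul_sum, add_comm]
    congr 1
    · refine sum_congr rfl fun i _ => ?_
      simp only [Function.comp, Fin.val_succ, pow_succ]
      ring
    · have key : ∀ a : ZMod 2, a.val * 2 ^ 0 = (decide (a = 1)).toNat := by decide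
      exact key (x 0)

theorem lexNat_testBit {n : ℕ} (x : Fin n → ZMod 2) (k : ℕ) :
    (lexNat x).testBit k = if h : k < n then decide (x ⟨k, h⟩ = 1) else false := by
  rw [lexNat_eq_ofBits, Nat.testBit_ofBits]

theorem lexNat_lt_two_pow {n : ℕ} (x : Fin n → ZMod 2) : lexNat x < 2 ^ n := by
  rw [lexNat_eq_ofBits]; exact Nat.ofBits_lt_two_pow _

theorem zmod_two_ext (a b : ZMod 2) : (decide (a = 1) = decide (b = 1)) → a = b := by
  revert a b; decide

theorem lexNat_inj {n : ℕ} : Function.Injective (lexNat (n := n)) := by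
  intro x y h
  funext k
  have := congrArg (fun m => m.testBit k) h
  simp only [lexNat_testBit, k.2, dif_pos] at this
  exact zmod_two_ext _ _ this

theorem lexNat_surj {n : ℕ} (m : ℕ) (hm : m < 2 ^ n) : ∃ x : Fin n → ZMod 2, lexNat x = m := by
  refine ⟨fun k => if m.testBit k then 1 else 0, ?_⟩
  rw [lexNat_eq_ofBits]
  have : (fun i : Fin n => decide ((if m.testBit i then (1 : ZMod 2) else 0) = 1)) =
      fun i : Fin n => m.testBit i := by
    funext i
    cases m.testBit i <;> simp
  rw [this, Nat.ofBits_testBit, Nat.mod_eq_of_lt hm]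

theorem lexNat_add {n : ℕ} (x y : Fin n → ZMod 2) : lexNat (x + y) = lexNat x ^^^ lexNat y := by
  apply Nat.eq_of_testBit_eq
  intro k
  rw [Nat.testBit_xor, lexNat_testBit, lexNat_testBit, lexNat_testBit]
  split_ifs with h
  · have key : ∀ a b : ZMod 2, decide (a + b = 1) = (decide (a = 1) ^^ decide (b = 1)) := by
      decide
    exact key _ _
  · rfl

/-- comparison at the top differing coordinate -/
theorem lexNat_lt_iff {n : ℕ} (x y : Fin n → ZMod 2) :
    lexNat x < lexNat y ↔ ∃ k, x k = 0 ∧ y k = 1 ∧ ∀ l, k < l → x l = y l := by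
  have key : ∀ x y : Fin n → ZMod 2, (∃ k, x k = 0 ∧ y k = 1 ∧ ∀ l, k < l → x l = y l) →
      lexNat x < lexNat y := by
    rintro x y ⟨k, h0, h1, h⟩
    refine Nat.lt_of_testBit k ?_ ?_ ?_
    · simp [lexNat_testBit, h0]
    · simp [lexNat_testBit, h1]
    · intro j hj
      rw [lexNat_testBit, lexNat_testBit]
      split_ifs with hn
      · rw [h ⟨j, hn⟩ hj]
      · rfl
  refine ⟨fun h => ?_, key x y⟩
  have hne : x ≠ y := by rintro rfl; exact lt_irrefl _ h
  let D : Finset (Fin n) := univ.filter fun k => x k ≠ y k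
  have hD : D.Nonempty := by
    obtain ⟨k, hk⟩ := Function.ne_iff.1 hne
    exact ⟨k, by simpa [D] using hk⟩
  have hk : x (D.max' hD) ≠ y (D.max' hD) := by
    simpa [D] using D.max'_mem hD
  have hl : ∀ l, D.max' hD < l → x l = y l := by
    intro l hl
    by_contra hne
    exact absurd (D.le_max' l (by simpa [D] using hne)) (not_le.2 hl)
  have two : ∀ a b : ZMod 2, a ≠ b → (a = 0 ∧ b = 1) ∨ (b = 0 ∧ a = 1) := by decide
  rcases two _ _ hk with ⟨h0, h1⟩ | ⟨h0, h1⟩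
  · exact ⟨_, h0, h1, hl⟩
  · exact absurd h (not_lt.2 (key y x ⟨_, h0, h1, fun l h => (hl l h).symm⟩).le)

/-- the coordinates of `x` in `I`, reindexed in increasing order -/
def restr {n : ℕ} (I : Finset (Fin n)) (x : Fin n → ZMod 2) : Fin #I → ZMod 2 :=
  fun k => x (I.orderEmbOfFin rfl k)

theorem mem_cosetOf {n : ℕ} (I : Finset (Fin n)) (x y : Fin n → ZMod 2) :
    y ∈ cosetOf I x ↔ ∀ i ∉ I, y i = x i := by
  simp [cosetOf]

theorem exists_index {n : ℕ} (I : Finset (Fin n)) (i : Fin n) (hi : i ∈ I) :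
    ∃ k, I.orderEmbOfFin rfl k = i := by
  have : i ∈ Set.range (I.orderEmbOfFin rfl) := by rw [range_orderEmbOfFin]; exact hi
  exact this

theorem restr_inj {n : ℕ} (I : Finset (Fin n)) (x y : Fin n → ZMod 2) (h : ∀ i ∉ I, y i = x i)
    (hr : restr I y = restr I x) : y = x := by
  funext i
  by_cases hi : i ∈ I
  · obtain ⟨k, rfl⟩ := exists_index I i hi
    exact congrFun hr k
  · exact h i hi

theorem restr_lt_iff {n : ℕ} (I : Finset (Fin n)) (x y : Fin n → ZMod 2)
    (h : ∀ i ∉ I, y i = x i) :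
    lexNat y < lexNat x ↔ lexNat (restr I y) < lexNat (restr I x) := by
  rw [lexNat_lt_iff, lexNat_lt_iff]
  constructor
  · rintro ⟨i, h0, h1, hl⟩
    have hi : i ∈ I := by
      by_contra hi
      have := h i hi
      rw [h0, h1] at this
      exact absurd this (by decide)
    obtain ⟨k, rfl⟩ := exists_index I i hi
    exact ⟨k, h0, h1, fun l hkl => hl _ ((I.orderEmbOfFin rfl).lt_iff_lt.2 hkl)⟩
  · rintro ⟨k, h0, h1, hl⟩
    refine ⟨I.orderEmbOfFin rfl k, h0, h1, fun l hkl => ?_⟩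
    by_cases hi : l ∈ I
    · obtain ⟨m, rfl⟩ := exists_index I l hi
      exact hl m ((I.orderEmbOfFin rfl).lt_iff_lt.1 hkl)
    · exact h l hi

theorem restr_surj {n : ℕ} (I : Finset (Fin n)) (x : Fin n → ZMod 2) (z : Fin #I → ZMod 2) :
    ∃ y ∈ cosetOf I x, restr I y = z := by
  classical
  refine ⟨fun i => if hi : i ∈ I then z (exists_index I i hi).choose else x i, ?_, ?_⟩
  · rw [mem_cosetOf]
    intro i hi
    simp [hi]
  · funext k
    have hk : I.orderEmbOfFin rfl k ∈ I := orderEmbOfFin_mem _ _ _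
    simp only [restr, hk, dif_pos]
    congr 1
    exact (I.orderEmbOfFin rfl).injective (exists_index I _ hk).choose_spec

theorem rank_eq {n : ℕ} (I : Finset (Fin n)) (x : Fin n → ZMod 2) :
    #((cosetOf I x).filter fun y => lexNat y < lexNat x) = lexNat (restr I x) := by
  rw [← card_range (lexNat (restr I x))]
  refine card_bij (fun y _ => lexNat (restr I y)) ?_ ?_ ?_
  · intro y hy
    rw [mem_filter, mem_cosetOf] at hy
    rw [mem_range]
    exact (restr_lt_iff I x y hy.1).1 hy.2
  · intro y hy z hz h
    rw [mem_filter, mem_cosetOf] at hy hz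
    exact restr_inj I z y (fun i hi => (hy.1 i hi).trans (hz.1 i hi).symm) (lexNat_inj h)
  · intro m hm
    rw [mem_range] at hm
    obtain ⟨z, rfl⟩ := lexNat_surj m (hm.trans (lexNat_lt_two_pow _))
    obtain ⟨y, hy, rfl⟩ := restr_surj I x z
    refine ⟨y, ?_, rfl⟩
    rw [mem_filter]
    exact ⟨hy, (restr_lt_iff I x y ((mem_cosetOf _ _ _).1 hy)).2 hm⟩

theorem mem_compressI {n : ℕ} (I : Finset (Fin n)) (A : Finset (Fin n → ZMod 2))
    (x : Fin n → ZMod 2) :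
    x ∈ compressI I A ↔ lexNat (restr I x) < #(A ∩ cosetOf I x) := by
  have hx : x ∈ cosetOf I x := by simp [mem_cosetOf]
  rw [compressI, mem_filter, initSeg, mem_filter, rank_eq]
  simp [hx]

theorem compress_add {n : ℕ} (I : Finset (Fin n)) (A B : Finset (Fin n → ZMod 2)) :
    compressI I A + compressI I B ⊆ compressI I (A + B) := by
  intro z hz
  obtain ⟨x, hx, y, hy, rfl⟩ := mem_add.1 hz
  rw [mem_compressI] at hx hy ⊢
  have hr : restr I (x + y) = restr I x + restr I y := rfl
  rw [hr, lexNat_add]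
  refine (core_lemma _ _ _ _ hx hy).trans_le (card_le_card ?_)
  intro w hw
  obtain ⟨a, ha, b, hb, rfl⟩ := mem_add.1 hw
  rw [mem_inter, mem_cosetOf] at ha hb ⊢
  refine ⟨add_mem_add ha.1 hb.1, fun i hi => ?_⟩
  rw [Pi.add_apply, Pi.add_apply, ha.2 i hi, hb.2 i hi]

theorem card_compress_le {n : ℕ} (I : Finset (Fin n)) (A : Finset (Fin n → ZMod 2)) :
    #(compressI I A) ≤ #A := by
  classical
  let f : (Fin n → ZMod 2) → (Fin n → ZMod 2) := fun x i => if i ∈ I then 0 else x i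
  have hf : ∀ x c, f x = f c ↔ ∀ i ∉ I, x i = c i := by
    intro x c
    constructor
    · intro h i hi
      simpa [f, hi] using congrFun h i
    · intro h
      funext i
      by_cases hi : i ∈ I
      · simp [f, hi]
      · simp [f, hi, h i hi]
  rw [card_eq_sum_card_fiberwise (f := f) (s := compressI I A) (t := univ.image f)
      (fun x _ => by simp),
    card_eq_sum_card_fiberwise (f := f) (s := A) (t := univ.image f) (fun x _ => by simp)]
  refine sum_le_sum fun b hb => ?_
  obtain ⟨c, -, rfl⟩ := mem_image.1 hb
  have hA : (A.filter fun a => f a = f c) = A ∩ cosetOf I c := by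
    ext a
    rw [mem_filter, mem_inter, mem_cosetOf, hf]
  rw [hA, ← card_range #(A ∩ cosetOf I c)]
  refine card_le_card_of_injOn (fun x => lexNat (restr I x)) ?_ ?_
  · intro x hx
    simp only [coe_filter, Set.mem_ofPred_eq, hf, mem_compressI] at hx
    have : cosetOf I x = cosetOf I c := by
      ext y
      rw [mem_cosetOf, mem_cosetOf]
      exact forall₂_congr fun i hi => by rw [hx.2 i hi]
    simpa [← this] using hx.1
  · intro x hx y hy h
    simp only [coe_filter, Set.mem_ofPred_eq, hf] at hx hy
    exact restr_inj I y x (fun i hi => (hx.2 i hi).trans (hy.2 i hi).symm) (lexNat_inj h)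

theorem stmt6 {n : ℕ} (I : Finset (Fin n)) (A B : Finset (Fin n → ZMod 2)) :
    compressI I A + compressI I B ⊆ compressI I (A + B) ∧
    (compressI I A + compressI I B).card ≤ (A + B).card := by
  exact ⟨compress_add I A B,
    (card_le_card (compress_add I A B)).trans (card_compress_le I (A + B))⟩
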